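/- Let A ∈ ℂ^{N×N} be nonsingular and let Z ∈ ℂ^{N×n} have full column rank, with columns that are eigenvectors of A; that is, A Z = Z Λ for some diagonal matrix Λ ∈ ℂ^{n×n} whose diagonal entries are (necessarily nonzero) eigenvalues of A. Then E := Zᴴ A Z is invertible and ker(Zᴴ) ∩ range(A Z) = {0}. -/

import Mathlib

open Matrix

/-!
Since `A Z = Z Λ`, the range of `A Z` lies in the range of `Z`, which is the orthogonal complement
of `ker Zᴴ`; hence `ker Zᴴ ∩ range (A Z) = {0}`. If `E v = Zᴴ (A Z v) = 0`, then `A Z v` lies in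
this intersection, so `A Z v = 0`, and `v = 0` because `A Z` has full column rank.
-/

theorem eq_zero_of_conjTranspose_mulVec_eq_zero_of_mem_range
    {R m n : Type*} [Fintype m] [Fintype n] [NonUnitalRing R] [PartialOrder R] [StarRing R]
    [StarOrderedRing R] [NoZeroDivisors R] {Z : Matrix m n R} {x : m → R}
    (hx : Zᴴ *ᵥ x = 0) (hxZ : x ∈ Set.range Z.mulVec) : x = 0 := by
  obtain ⟨y, rfl⟩ := hxZ
  rwa [mulVec_mulVec, conjTranspose_mul_self_mulVec_eq_zero] at hx

theorem range_mulVec_mul_subset {R l m n : Type*} [Fintype m] [Fintype n] [NonUnitalSemiring R]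
    (B : Matrix l m R) (C : Matrix m n R) :
    Set.range (B * C).mulVec ⊆ Set.range B.mulVec := by
  rintro _ ⟨y, rfl⟩
  exact ⟨C *ᵥ y, mulVec_mulVec y B C⟩

theorem mulVec_injective_of_rank_eq_card {K m n : Type*} [Field K] [Fintype n]
    {M : Matrix m n K} (hM : M.rank = Fintype.card n) : Function.Injective M.mulVec := by
  rw [mulVec_injective_iff, linearIndependent_iff_card_eq_finrank_span, Set.finrank,
    ← rank_eq_finrank_span_cols, hM]

theorem deflation_hypotheses_hold_for_eigenvector_columns_general
    {K m n : Type*} [Fintype m] [Fintype n] [DecidableEq n] [Field K] [PartialOrder K]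
    [StarRing K] [StarOrderedRing K] {A : Matrix m m K} {Z : Matrix m n K} {Λ : Matrix n n K}
    (hAZ : A * Z = Z * Λ) (hrank : (A * Z).rank = Fintype.card n) :
    IsUnit (Zᴴ * A * Z) ∧
      ∀ x : m → K, Zᴴ *ᵥ x = 0 → x ∈ Set.range (A * Z).mulVec → x = 0 := by
  have trivial_inter (x : m → K) (hx : Zᴴ *ᵥ x = 0) (hxAZ : x ∈ Set.range (A * Z).mulVec) :
      x = 0 :=
    eq_zero_of_conjTranspose_mulVec_eq_zero_of_mem_range hx
      (range_mulVec_mul_subset Z Λ (hAZ ▸ hxAZ))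
  have ker_trivial (v : n → K) (hv : (Zᴴ * A * Z) *ᵥ v = 0) : v = 0 := by
    rw [Matrix.mul_assoc, ← mulVec_mulVec] at hv
    have hAZv : (A * Z) *ᵥ v = 0 := trivial_inter _ hv ⟨v, rfl⟩
    exact mulVec_injective_of_rank_eq_card hrank (hAZv.trans (mulVec_zero _).symm)
  refine ⟨mulVec_injective_iff_isUnit.mp ?_, trivial_inter⟩
  exact (injective_iff_map_eq_zero (Zᴴ * A * Z).mulVecLin).mpr ker_trivial

/-- If the columns of a full-column-rank `Z` are eigenvectors of a nonsingular `A`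
(`A Z = Z Λ` with `Λ` diagonal), then `E = Zᴴ A Z` is invertible and
`ker(Zᴴ) ∩ range(A Z) = {0}`. -/
theorem deflation_hypotheses_hold_for_eigenvector_columns
    {N n : ℕ}
    (A : Matrix (Fin N) (Fin N) ℂ) (hA : IsUnit A.det)
    (Z : Matrix (Fin N) (Fin n) ℂ) (hZ : Z.rank = n)
    (Λ : Matrix (Fin n) (Fin n) ℂ) (hΛ : Λ.IsDiag) (hAZ : A * Z = Z * Λ) :
    IsUnit (Zᴴ * A * Z) ∧
      ∀ x : Fin N → ℂ, Zᴴ.mulVec x = 0 → x ∈ Set.range (A * Z).mulVec → x = 0 := by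
  open scoped ComplexOrder in
  exact deflation_hypotheses_hold_for_eigenvector_columns_general hAZ
    (by rw [rank_mul_eq_right_of_isUnit_det A Z hA, hZ, Fintype.card_fin])
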